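/- Let p be an odd prime, G a finite abelian p-group of order n, k an integer with 2 ≤ k < n and p | k, and x = (x_1,…,x_m) ∈ Z_{p^{t_1}} ⊕ ⋯ ⊕ Z_{p^{t_m}}. If there exists an index i with p ∤ x_i, then (G, B_k^x) is a 1-design. -/

import Mathlib

open Finset

/-- The family of `k`-element subsets of `G` whose elements sum to `x`. -/
def sumBlocks (G : Type) [AddCommGroup G] [Fintype G] [DecidableEq G]
    (k : ℕ) (x : G) : Finset (Finset G) :=
  Finset.univ.filter (fun T => T.card = k ∧ T.sum id = x)

/-- The family of `k`-element subsets of `G \ {0}` whose elements sum to `x`. -/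
def sumBlocksStar (G : Type) [AddCommGroup G] [Fintype G] [DecidableEq G]
    (k : ℕ) (x : G) : Finset (Finset G) :=
  Finset.univ.filter (fun T => T.card = k ∧ T.sum id = x ∧ (0 : G) ∉ T)

/-- `(G, B_k^x)` is a 1-design: the block family is nonempty and every
point of `G` lies in the same number of blocks. -/
def isOneDesign (G : Type) [AddCommGroup G] [Fintype G] [DecidableEq G]
    (k : ℕ) (x : G) : Prop :=
  sumBlocks G k x ≠ ∅ ∧ ∃ r : ℕ, ∀ y : G,
    ((sumBlocks G k x).filter (fun B => y ∈ B)).card = r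

/-- `e(x) = max {d : d ∣ exp(G), x ∈ dG}`. -/
noncomputable def eMax (G : Type) [AddCommGroup G] [Fintype G] [DecidableEq G] (x : G) : ℕ :=
  Nat.findGreatest (fun d => d ∣ AddMonoid.exponent G ∧ ∃ y : G, d • y = x)
    (AddMonoid.exponent G)

/-!
Let `f : G →+ ZMod p` with `f x ≠ 0`, which exists because `x` is not divisible by `p`. If `T` sums
to `x`, then `f x = ∑ c, #(T ∩ f⁻¹ c) • c`, so some fiber over a nonzero `c` meets `T` in a number
`a` of points prime to `p`. Translating those points by `a⁻¹ u`, where `f u = 0`, adds `u` to the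
sum of `T`, keeps every `#(T ∩ f⁻¹ c)`, and fixes `0`. As the choice of `c` depends only on these
cardinalities, this is injective in `T`: it shows that the number of blocks through `0` is the same
for the sums `x` and `x + u`. Finally, translation by `-y` carries the blocks through `y` of sum `x`
to the blocks through `0` of sum `x - k • y`, and `f (k • y) = 0` since `p ∣ k`.

For the existence of a block, some `k`-subset has a sum outside `ker f`; a dilation by an integer
prime to `p` followed by a translation in one fiber turns its sum into `x`.
-/

section FiberShift

variable {G A : Type*} [AddCommGroup G] [AddCommGroup A] [DecidableEq A]
  {f : G →+ A} {c : A} {v : G}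

/-- The map translating the fiber of `f` over `c` by `v` and fixing every other point of `G`; it
permutes each fiber of `f` when `f v = 0`. -/
def fiberShift (f : G →+ A) (c : A) (v g : G) : G :=
  if f g = c then g + v else g

/-- The number of points of `T` in the fiber of `f` over `c`. -/
def fiberCard (f : G →+ A) (T : Finset G) (c : A) : ℕ :=
  #{g ∈ T | f g = c}

lemma map_fiberShift (hv : f v = 0) (g : G) : f (fiberShift f c v g) = f g := by
  unfold fiberShift
  split_ifs <;> simp [hv]

lemma fiberShift_injective (hv : f v = 0) : Function.Injective (fiberShift f c v) := by
  intro g h hgh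
  have hf : f g = f h := by rw [← map_fiberShift (c := c) hv g, hgh, map_fiberShift hv]
  unfold fiberShift at hgh
  rw [hf] at hgh
  split_ifs at hgh
  · exact add_right_cancel hgh
  · exact hgh

lemma fiberShift_zero (hc : c ≠ 0) : fiberShift f c v 0 = 0 := by
  simp [fiberShift, hc.symm]

lemma exists_fiberCard_not_dvd {p : ℕ} (hA : ∀ a : A, p • a = 0) {T : Finset G}
    (hT : f (∑ g ∈ T, g) ≠ 0) : ∃ c ≠ 0, ¬ p ∣ fiberCard f T c := by
  contrapose! hT
  rw [map_sum, sum_comp (fun a : A => a) f]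
  refine sum_eq_zero fun c _ => ?_
  obtain rfl | hc := eq_or_ne c 0
  · exact smul_zero _
  · obtain ⟨b, hb⟩ := hT c hc
    rw [← fiberCard, hb, mul_nsmul, hA, smul_zero]

variable [DecidableEq G]

lemma fiberCard_image_fiberShift (hv : f v = 0) (T : Finset G) :
    fiberCard f (T.image (fiberShift f c v)) = fiberCard f T := by
  funext d
  simp only [fiberCard, filter_image, map_fiberShift hv]
  exact card_image_of_injective _ (fiberShift_injective hv)

lemma sum_image_fiberShift (hv : f v = 0) (T : Finset G) :
    ∑ g ∈ T.image (fiberShift f c v), g = ∑ g ∈ T, g + fiberCard f T c • v := by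
  have shift_eq (g : G) : fiberShift f c v g = g + if f g = c then v else 0 := by
    unfold fiberShift
    split_ifs <;> simp
  rw [sum_image (fiberShift_injective hv).injOn]
  simp only [shift_eq, sum_add_distrib, ← sum_filter, sum_const, fiberCard]

end FiberShift

lemma coprime_card_of_not_dvd {G : Type*} {p s n : ℕ} (hp : p.Prime) (hG : Nat.card G = p ^ s)
    (hn : ¬ p ∣ n) : (Nat.card G).Coprime n :=
  hG ▸ ((hp.coprime_iff_not_dvd).2 hn).pow_left s

lemma exists_nsmul_eq_of_coprime_card {G A : Type*} [AddCommGroup G] [AddCommGroup A] {n : ℕ}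
    (hn : (Nat.card G).Coprime n) {f : G →+ A} {u : G} (hu : f u = 0) :
    ∃ v, f v = 0 ∧ n • v = u :=
  ⟨(nsmulCoprime hn).symm u, by simp [hu], (nsmulCoprime hn).apply_symm_apply u⟩

lemma exists_injOn_sum_add {G A : Type*} [AddCommGroup G] [AddCommGroup A]
    {p s : ℕ} (hp : p.Prime) (hG : Nat.card G = p ^ s) (hA : ∀ a : A, p • a = 0)
    {f : G →+ A} {u : G} (hu : f u = 0) :
    ∃ Φ : Finset G → Finset G, Set.InjOn Φ {T | f (∑ g ∈ T, g) ≠ 0} ∧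
      ∀ T, f (∑ g ∈ T, g) ≠ 0 →
        #(Φ T) = #T ∧ ∑ g ∈ Φ T, g = ∑ g ∈ T, g + u ∧ (0 ∈ T → 0 ∈ Φ T) := by
  classical
  have exists_shift (N : A → ℕ) : ∃ (c : A) (v : G), f v = 0 ∧
      ((∃ d ≠ 0, ¬ p ∣ N d) → c ≠ 0 ∧ N c • v = u) := by
    by_cases hN : ∃ d ≠ 0, ¬ p ∣ N d
    · obtain ⟨c, hc, hpc⟩ := hN
      obtain ⟨v, hv, hvu⟩ :=
        exists_nsmul_eq_of_coprime_card (coprime_card_of_not_dvd hp hG hpc) hu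
      exact ⟨c, v, hv, fun _ => ⟨hc, hvu⟩⟩
    · exact ⟨0, 0, map_zero f, fun h => absurd h hN⟩
  choose c v hv hcv using exists_shift
  let Φ (T : Finset G) : Finset G :=
    T.image (fiberShift f (c (fiberCard f T)) (v (fiberCard f T)))
  have fiberCard_Φ (T : Finset G) : fiberCard f (Φ T) = fiberCard f T :=
    fiberCard_image_fiberShift (hv _) T
  refine ⟨Φ, fun S _ T _ hST => ?_, fun T hT => ?_⟩
  · have hfib : fiberCard f S = fiberCard f T := by rw [← fiberCard_Φ S, hST, fiberCard_Φ]
    refine image_injective (fiberShift_injective (c := c (fiberCard f T)) (hv (fiberCard f T))) ?_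
    simpa only [Φ, hfib] using hST
  · obtain ⟨hc, hvu⟩ := hcv _ (exists_fiberCard_not_dvd hA hT)
    refine ⟨card_image_of_injective _ (fiberShift_injective (hv _)), ?_, fun h0 => ?_⟩
    · rw [sum_image_fiberShift (hv _), hvu]
    · exact mem_image.2 ⟨0, h0, fiberShift_zero hc⟩

open scoped Pointwise in
lemma sum_vadd_finset {G : Type*} [AddCommGroup G] [DecidableEq G] (v : G) (T : Finset G) :
    ∑ g ∈ v +ᵥ T, g = ∑ g ∈ T, g + #T • v := by
  rw [← image_vadd, sum_image (AddAction.injective v).injOn, add_comm, ← sum_const,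
    ← sum_add_distrib]
  rfl

section SumBlocks

variable {G : Type} [AddCommGroup G] [Fintype G] [DecidableEq G] {k : ℕ} {x : G}

lemma mem_sumBlocks {T : Finset G} : T ∈ sumBlocks G k x ↔ #T = k ∧ ∑ g ∈ T, g = x := by
  simp [sumBlocks]

open scoped Pointwise in
lemma card_sumBlocks_filter_mem_eq (y v : G) :
    #{B ∈ sumBlocks G k x | y ∈ B} = #{B ∈ sumBlocks G k (x + k • v) | v + y ∈ B} := by
  refine card_equiv (AddAction.toPerm v) fun T => ?_
  simp only [mem_filter, mem_sumBlocks, AddAction.toPerm_apply, card_vadd_finset, sum_vadd_finset,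
    ← vadd_eq_add v y, vadd_mem_vadd_finset_iff]
  refine and_congr_left fun _ => and_congr_right fun hcard => ?_
  rw [hcard, add_left_inj]

section MapEq

variable {A : Type*} [AddCommGroup A] {p s : ℕ} {f : G →+ A} {z w : G}

lemma card_sumBlocks_filter_zero_mem_le (hp : p.Prime) (hG : Nat.card G = p ^ s)
    (hA : ∀ a : A, p • a = 0) (hz : f z ≠ 0) (hzw : f z = f w) :
    #{B ∈ sumBlocks G k z | 0 ∈ B} ≤ #{B ∈ sumBlocks G k w | 0 ∈ B} := by
  obtain ⟨Φ, hinj, hΦ⟩ := exists_injOn_sum_add (f := f) (u := w - z) hp hG hA (by simp [hzw])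
  have map_sum_ne {T : Finset G} (hT : T ∈ ({B ∈ sumBlocks G k z | 0 ∈ B} : Finset _)) :
      f (∑ g ∈ T, g) ≠ 0 := by
    rwa [(mem_sumBlocks.1 (mem_filter.1 hT).1).2]
  refine card_le_card_of_injOn Φ (fun T hT => ?_) (hinj.mono fun T hT => map_sum_ne hT)
  obtain ⟨hcard, hsum, hzero⟩ := hΦ T (map_sum_ne hT)
  obtain ⟨hTblock, h0⟩ := mem_filter.1 hT
  obtain ⟨hTcard, hTsum⟩ := mem_sumBlocks.1 hTblock
  refine mem_filter.2 ⟨mem_sumBlocks.2 ⟨hcard.trans hTcard, ?_⟩, hzero h0⟩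
  rw [hsum, hTsum, add_sub_cancel]

lemma card_sumBlocks_filter_zero_mem_congr (hp : p.Prime) (hG : Nat.card G = p ^ s)
    (hA : ∀ a : A, p • a = 0) (hz : f z ≠ 0) (hzw : f z = f w) :
    #{B ∈ sumBlocks G k z | 0 ∈ B} = #{B ∈ sumBlocks G k w | 0 ∈ B} :=
  (card_sumBlocks_filter_zero_mem_le hp hG hA hz hzw).antisymm
    (card_sumBlocks_filter_zero_mem_le hp hG hA (hzw ▸ hz) hzw.symm)

lemma sumBlocks_nonempty_of_map_eq (hp : p.Prime) (hG : Nat.card G = p ^ s)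
    (hA : ∀ a : A, p • a = 0) (hz : f z ≠ 0) (hzw : f z = f w)
    (hne : (sumBlocks G k z).Nonempty) : (sumBlocks G k w).Nonempty := by
  obtain ⟨T, hT⟩ := hne
  obtain ⟨hTcard, rfl⟩ := mem_sumBlocks.1 hT
  obtain ⟨Φ, -, hΦ⟩ :=
    exists_injOn_sum_add (f := f) (u := w - ∑ g ∈ T, g) hp hG hA (by simp [hzw])
  obtain ⟨hcard, hsum, -⟩ := hΦ T hz
  exact ⟨Φ T, mem_sumBlocks.2 ⟨hcard.trans hTcard, by rw [hsum, add_sub_cancel]⟩⟩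

end MapEq

lemma exists_sumBlocks_nonempty_map_ne_zero {A : Type*} [AddCommGroup A] {f : G →+ A}
    (hx : f x ≠ 0) (hk : 0 < k) (hkG : k < Nat.card G) :
    ∃ z, f z ≠ 0 ∧ (sumBlocks G k z).Nonempty := by
  have hx0 : 0 ≠ x := by
    rintro rfl
    exact hx (map_zero f)
  obtain ⟨T, hT, hTcard⟩ : ∃ T ⊆ ({0, x}ᶜ : Finset G), #T = k - 1 := by
    apply exists_subset_card_eq
    rw [card_compl, card_pair hx0, ← Nat.card_eq_fintype_card]
    omega
  have insert_nonempty {a : G} (ha : a ∈ ({0, x} : Finset G)) :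
      (sumBlocks G k (a + ∑ g ∈ T, g)).Nonempty := by
    have haT : a ∉ T := fun h => mem_compl.1 (hT h) ha
    refine ⟨insert a T, mem_sumBlocks.2 ⟨?_, sum_insert haT⟩⟩
    rw [card_insert_of_notMem haT, hTcard, Nat.sub_add_cancel hk]
  by_cases hfT : f (∑ g ∈ T, g) = 0
  · exact ⟨_, by simpa [hfT] using hx, insert_nonempty (a := x) (by simp)⟩
  · exact ⟨_, by simpa using hfT, insert_nonempty (a := 0) (by simp)⟩

lemma sumBlocks_nsmul_nonempty {n : ℕ} (hn : (Nat.card G).Coprime n)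
    (hne : (sumBlocks G k x).Nonempty) : (sumBlocks G k (n • x)).Nonempty := by
  obtain ⟨T, hT⟩ := hne
  obtain ⟨hcard, rfl⟩ := mem_sumBlocks.1 hT
  refine ⟨T.map (nsmulCoprime hn).toEmbedding, mem_sumBlocks.2 ⟨by rw [card_map, hcard], ?_⟩⟩
  simp [smul_sum]

lemma sumBlocks_nonempty {p s : ℕ} (hp : p.Prime) (hG : Nat.card G = p ^ s) {f : G →+ ZMod p}
    (hx : f x ≠ 0) (hk : 0 < k) (hkG : k < Nat.card G) : (sumBlocks G k x).Nonempty := by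
  have : Fact p.Prime := ⟨hp⟩
  obtain ⟨z, hz, hne⟩ := exists_sumBlocks_nonempty_map_ne_zero hx hk hkG
  obtain ⟨n, hn⟩ := ZMod.natCast_zmod_surjective (f x / f z)
  have hpn : ¬ p ∣ n := by
    rw [← ZMod.natCast_eq_zero_iff, hn]
    exact div_ne_zero hx hz
  have hnz : f (n • z) = f x := by rw [map_nsmul, nsmul_eq_mul, hn, div_mul_cancel₀ _ hz]
  exact sumBlocks_nonempty_of_map_eq hp hG (by simp) (hnz ▸ hx) hnz
    (sumBlocks_nsmul_nonempty (coprime_card_of_not_dvd hp hG hpn) hne)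

end SumBlocks

lemma exists_zmodHom_apply_ne_zero {G : Type*} [AddCommGroup G] {p : ℕ} (hp : p.Prime) {x : G}
    (hx : ∀ y, p • y ≠ x) : ∃ f : G →+ ZMod p, f x ≠ 0 := by
  have : Fact p.Prime := ⟨hp⟩
  have hmk : ModN.mkQ p x ≠ 0 := by
    intro h
    obtain ⟨y, hy⟩ := (Submodule.Quotient.mk_eq_zero _).1 h
    exact hx y (by simpa using hy)
  obtain ⟨φ, hφ⟩ := Module.Projective.exists_dual_ne_zero (ZMod p) hmk
  exact ⟨φ.toAddMonoidHom.comp (ModN.mkQ p), hφ⟩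

lemma dvd_val_nsmul {p n : ℕ} (hpn : p ∣ n) (a : ZMod n) : p ∣ (p • a).val := by
  rw [nsmul_eq_mul, ZMod.val_mul, ZMod.val_natCast, Nat.dvd_mod_iff hpn]
  exact dvd_mul_of_dvd_left ((Nat.dvd_mod_iff hpn).2 dvd_rfl) _

lemma card_pi_zmod_pow {ι : Type*} [Fintype ι] (p : ℕ) (t : ι → ℕ) :
    Nat.card ((i : ι) → ZMod (p ^ t i)) = p ^ ∑ i, t i := by
  simp [Nat.card_pi, prod_pow_eq_pow_sum]

theorem stmt4_general {G : Type} [AddCommGroup G] [Fintype G] [DecidableEq G] {p s : ℕ}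
    (hp : p.Prime) (hG : Nat.card G = p ^ s) {k : ℕ} (hk : 0 < k) (hkG : k < Nat.card G)
    (hpk : p ∣ k) {x : G} (hx : ∀ y, p • y ≠ x) : isOneDesign G k x := by
  obtain ⟨f, hfx⟩ := exists_zmodHom_apply_ne_zero hp hx
  have map_nsmul_eq_zero (y : G) : f (k • y) = 0 := by
    rw [map_nsmul, nsmul_eq_mul, (ZMod.natCast_eq_zero_iff k p).2 hpk, zero_mul]
  refine ⟨(sumBlocks_nonempty hp hG hfx hk hkG).ne_empty, #{B ∈ sumBlocks G k x | 0 ∈ B},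
    fun y => ?_⟩
  calc #{B ∈ sumBlocks G k x | y ∈ B}
      = #{B ∈ sumBlocks G k (x + k • -y) | 0 ∈ B} := by
        rw [card_sumBlocks_filter_mem_eq y (-y), neg_add_cancel]
    _ = #{B ∈ sumBlocks G k x | 0 ∈ B} := by
        have hf : f x = f (x + k • -y) := by rw [map_add, map_nsmul_eq_zero, add_zero]
        exact (card_sumBlocks_filter_zero_mem_congr hp hG (by simp) hfx hf).symm

theorem stmt4 (p m : ℕ) (hp : p.Prime) (hodd : Odd p)
    (t : Fin m → ℕ) (ht : ∀ i, 1 ≤ t i) (hmono : Monotone t)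
    [∀ i, NeZero (p ^ t i)]
    (k : ℕ) (hk2 : 2 ≤ k)
    (hkn : k < Fintype.card ((i : Fin m) → ZMod (p ^ t i)))
    (hpk : p ∣ k)
    (x : (i : Fin m) → ZMod (p ^ t i))
    (hi : ∃ i, ¬ (p ∣ (x i).val)) :
    isOneDesign ((i : Fin m) → ZMod (p ^ t i)) k x := by
  obtain ⟨i, hxi⟩ := hi
  have hp_dvd : p ∣ p ^ t i := dvd_pow_self p (Nat.one_le_iff_ne_zero.1 (ht i))
  exact stmt4_general hp (card_pi_zmod_pow p t) (by omega) (by rwa [Nat.card_eq_fintype_card]) hpk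
    fun y hy => hxi (hy ▸ dvd_val_nsmul hp_dvd (y i))
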